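/- For every positive integer n, the partition graph G_n is connected. -/

import Mathlib

/-- One partition is obtained from another by an elementary unit transfer:
pick two (occurrences of) parts, increase one by 1 and decrease the other by 1,
deleting the latter if it becomes 0.  Since a partition is recorded as a
multiset of parts, reordering into nonincreasing form is automatic. -/
def UnitTransfer {n : ℕ} (p q : Nat.Partition n) : Prop :=
  ∃ (a b : ℕ) (rest : Multiset ℕ),
    p.parts = a ::ₘ b ::ₘ rest ∧
    q.parts = (a + 1) ::ₘ (if b = 1 then rest else (b - 1) ::ₘ rest)

/-- The partition graph `G_n`: vertices are partitions of `n`, two distinct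
partitions are adjacent when one is obtained from the other by an elementary
unit transfer. -/
def partitionGraph (n : ℕ) : SimpleGraph (Nat.Partition n) :=
  SimpleGraph.fromRel UnitTransfer

/-- Graph distance `d_S(λ) = min_{σ ∈ S} d(λ, σ)` from a vertex to a set. -/
noncomputable def dSet {n : ℕ} (S : Set (Nat.Partition n)) (l : Nat.Partition n) : ℕ :=
  sInf ((fun s => (partitionGraph n).dist l s) '' S)

/-!
Fix one part of a partition and let it take one unit at a time from the other parts: while it is
smaller than `n` some other part is left to take from, and once it equals `n` the partition is
`(n)`. Hence every partition is joined to `(n)`.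
-/

section

variable {n a b : ℕ} {p q : n.Partition} {s : Multiset ℕ}

theorem UnitTransfer.reachable (h : UnitTransfer p q) : (partitionGraph n).Reachable p q := by
  obtain rfl | hne := eq_or_ne p q
  · rfl
  · exact ((SimpleGraph.fromRel_adj _ _ _).mpr ⟨hne, .inl h⟩).reachable

theorem add_sum_eq_of_parts_eq_cons (hp : p.parts = a ::ₘ s) : a + s.sum = n := by
  rw [← Multiset.sum_cons, ← hp, p.parts_sum]

theorem eq_indiscrete_of_mem_parts (hn : n ∈ p.parts) : p = Nat.Partition.indiscrete n := by
  obtain ⟨s, hp⟩ := Multiset.exists_cons_of_mem hn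
  have hs_sum : s.sum = 0 := by simpa using add_sum_eq_of_parts_eq_cons hp
  have hs : s = 0 := Multiset.eq_zero_of_forall_notMem fun b hb =>
    (p.parts_pos (hp ▸ Multiset.mem_cons_of_mem hb)).ne' (Multiset.sum_eq_zero_iff.mp hs_sum b hb)
  ext1
  rw [hp, hs, Nat.Partition.indiscrete_parts (p.parts_pos hn).ne', Multiset.cons_zero]

theorem exists_parts_eq_cons_cons (ha : a ∈ p.parts) (han : a < n) :
    ∃ b s, p.parts = a ::ₘ b ::ₘ s := by
  obtain ⟨t, hp⟩ := Multiset.exists_cons_of_mem ha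
  have ht : t ≠ 0 := by
    rintro rfl
    exact han.ne (by simpa using add_sum_eq_of_parts_eq_cons hp)
  obtain ⟨b, hb⟩ := Multiset.exists_mem_of_ne_zero ht
  obtain ⟨s, rfl⟩ := Multiset.exists_cons_of_mem hb
  exact ⟨b, s, hp⟩

theorem exists_unitTransfer_of_parts_eq_cons_cons (hp : p.parts = a ::ₘ b ::ₘ s) :
    ∃ q, UnitTransfer p q ∧ a + 1 ∈ q.parts := by
  have hpos : ∀ i ∈ b ::ₘ s, 0 < i := fun i hi => p.parts_pos (hp ▸ Multiset.mem_cons_of_mem hi)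
  have hb : 0 < b := hpos b (Multiset.mem_cons_self b s)
  have hsum : ((a + 1) ::ₘ (b - 1) ::ₘ s).sum = n := by
    have := add_sum_eq_of_parts_eq_cons hp
    simp only [Multiset.sum_cons] at this ⊢
    omega
  have hs : s.filter (· ≠ 0) = s :=
    Multiset.filter_eq_self.mpr fun i hi => (hpos i (Multiset.mem_cons_of_mem hi)).ne'
  -- `ofSums` discards zeros, which matches the deletion of `b - 1` when `b = 1`.
  refine ⟨.ofSums n _ hsum, ⟨a, b, s, hp, ?_⟩, by simp⟩
  obtain rfl | hb' := eq_or_ne b 1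
  · simp [hs]
  · have : b - 1 ≠ 0 := by omega
    simp [hs, hb', this]

theorem reachable_indiscrete_of_mem_parts (ha : a ∈ p.parts) :
    (partitionGraph n).Reachable p (.indiscrete n) := by
  induction Nat.Partition.le_of_mem_parts ha using Nat.decreasingInduction generalizing p with
  | self => rw [eq_indiscrete_of_mem_parts ha]
  | of_succ a han ih =>
    obtain ⟨b, s, hp⟩ := exists_parts_eq_cons_cons ha han
    obtain ⟨q, hpq, hq⟩ := exists_unitTransfer_of_parts_eq_cons_cons hp
    exact hpq.reachable.trans (ih hq)

end

/-- For every positive integer `n`, the partition graph `G_n` is connected. -/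
theorem partitionGraph_connected (n : ℕ) (hn : 0 < n) :
    (partitionGraph n).Connected := by
  refine (SimpleGraph.connected_iff_exists_forall_reachable _).mpr ⟨.indiscrete n, fun p => ?_⟩
  have hp : p.parts ≠ 0 := fun h => hn.ne (by simpa [h] using p.parts_sum)
  obtain ⟨a, ha⟩ := Multiset.exists_mem_of_ne_zero hp
  exact (reachable_indiscrete_of_mem_parts ha).symm
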